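/- arXiv:1104.3445 — 3 statements merged into one kernel-verified Lean document; each statement's English description precedes it below -/
import Mathlib

section
/- For any T > 0 and any initial datum ρ(·,0) ∈ L^∞([-1,1],[0,1]), there is at most one function ρ : [-1,1] × (0,T] → [0,1], continuous on [-1,1] × (0,T], satisfying the integral equation ρ(r,t) = ∫_{[-1,1]} P_t(r,r') ρ(r',0) dr' + (j/2) ∫_0^t { P_s(r,1)(1 − ρ(1,t−s)^K) − P_s(r,−1)(1 − (1−ρ(−1,t−s))^K) } ds for all r ∈ [-1,1] and t ∈ (0,T]. -/
open MeasureTheory Filter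

/-- Gaussian kernel `G_t(r,r')`. -/
noncomputable def Gker (t r r' : ℝ) : ℝ :=
  Real.exp (-(r - r')^2 / (2*t)) / Real.sqrt (2*Real.pi*t)

/-- The 4-periodic reflection map `ψ : ℝ → [-1,1]`, with `ψ x = x` on `[-1,1]`
and `ψ x = 2 - x` on `[1,3]` (a triangle wave). -/
noncomputable def psi (x : ℝ) : ℝ := (2/Real.pi) * Real.arcsin (Real.sin (Real.pi * x / 2))

/-- The Neumann heat kernel on `[-1,1]`: `P_t(r,r') = Σ_{r'' : ψ r'' = r'} G_t(r,r'')`,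
with the doubled convention at the endpoints `r' = ±1`. -/
noncomputable def Pker (t r r' : ℝ) : ℝ :=
  if r' = 1 ∨ r' = -1 then ∑' x : {y : ℝ // psi y = r'}, 2 * Gker t r (x : ℝ)
  else ∑' x : {y : ℝ // psi y = r'}, Gker t r (x : ℝ)
/-- Right hand side of the limit integral equation. -/
noncomputable def limitRHS (K : ℕ) (j : ℝ) (ρ0 : ℝ → ℝ) (ρ : ℝ → ℝ → ℝ) (r t : ℝ) : ℝ :=
  (∫ r' in Set.Icc (-1:ℝ) 1, Pker t r r' * ρ0 r')
  + (j/2) * ∫ s in Set.Ioc (0:ℝ) t,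
      (Pker s r 1 * (1 - (ρ 1 (t-s))^K)
        - Pker s r (-1) * (1 - (1 - ρ (-1) (t-s))^K))

/-- `ρ(r,t)` solves the limit integral equation with initial datum `ρ0` for all
`r ∈ [-1,1]` and `t > 0`. -/
def SolvesLimitEq (K : ℕ) (j : ℝ) (ρ0 : ℝ → ℝ) (ρ : ℝ → ℝ → ℝ) : Prop :=
  ∀ r ∈ Set.Icc (-1:ℝ) 1, ∀ t : ℝ, 0 < t → ρ r t = limitRHS K j ρ0 ρ r t

lemma psi_eq_one_iff (y : ℝ) : psi y = 1 ↔ ∃ k : ℤ, 1 + 4 * (k:ℝ) = y := by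
  have hpi := Real.pi_pos
  have h1 : psi y = 1 ↔ Real.arcsin (Real.sin (Real.pi * y / 2)) = Real.pi / 2 := by
    unfold psi
    constructor
    · intro h
      field_simp at h
      linarith
    · intro h
      rw [h]; field_simp
  rw [h1, Real.arcsin_eq_pi_div_two]
  constructor
  · intro h
    have h2 : Real.sin (Real.pi * y / 2) = 1 := le_antisymm (Real.sin_le_one _) h
    obtain ⟨k, hk⟩ := Real.sin_eq_one_iff.1 h2
    refine ⟨k, ?_⟩
    have : Real.pi * (1 + 4 * (k:ℝ)) = Real.pi * y := by linarith
    exact mul_left_cancel₀ hpi.ne' this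
  · rintro ⟨k, rfl⟩
    apply le_of_eq
    symm
    rw [Real.sin_eq_one_iff]
    exact ⟨k, by ring⟩

lemma psi_neg (y : ℝ) : psi (-y) = - psi y := by
  unfold psi
  have : Real.pi * (-y) / 2 = -(Real.pi * y / 2) := by ring
  rw [this, Real.sin_neg, Real.arcsin_neg]; ring

lemma psi_eq_neg_one_iff (y : ℝ) : psi y = -1 ↔ ∃ k : ℤ, -1 + 4 * (k:ℝ) = y := by
  have : psi y = -1 ↔ psi (-y) = 1 := by
    rw [psi_neg]; constructor <;> intro h <;> linarith
  rw [this, psi_eq_one_iff]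
  constructor
  · rintro ⟨k, hk⟩; exact ⟨-k, by push_cast; linarith⟩
  · rintro ⟨k, hk⟩; exact ⟨-k, by push_cast; linarith⟩

/-- The theta-like sum. -/
noncomputable def theta (a s : ℝ) : ℝ := ∑' k : ℤ, Real.exp (-(a - 4 * (k:ℝ))^2 / (2*s))

lemma Pker_eq (s r e : ℝ) (he : e = 1 ∨ e = -1) :
    Pker s r e = 2 / Real.sqrt (2*Real.pi*s) * theta (r - e) s := by
  have hiff : ∀ y, psi y = e ↔ ∃ k : ℤ, e + 4 * (k:ℝ) = y := by
    rcases he with rfl | rfl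
    · exact psi_eq_one_iff
    · exact psi_eq_neg_one_iff
  let f : ℤ → {y : ℝ // psi y = e} := fun k => ⟨e + 4 * (k:ℝ), (hiff _).2 ⟨k, rfl⟩⟩
  have hf : Function.Bijective f := by
    constructor
    · intro a b h
      have := congrArg Subtype.val h
      simp only [f] at this
      have h2 : (a:ℝ) = b := by linarith
      exact_mod_cast h2
    · rintro ⟨y, hy⟩
      obtain ⟨k, hk⟩ := (hiff y).1 hy
      exact ⟨k, Subtype.ext hk⟩
  unfold Pker theta
  rw [if_pos he, ← (Equiv.ofBijective f hf).tsum_eq, ← tsum_mul_left]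
  apply tsum_congr
  intro k
  simp only [Equiv.ofBijective_apply, f, Gker]
  rw [show r - (e + 4 * (k:ℝ)) = r - e - 4 * k by ring]
  ring

lemma summable_bd (T : ℝ) (hT : 0 < T) :
    Summable (fun k : ℤ => Real.exp (-(2 / T) * (k:ℝ)^2)) := by
  have h0 : 0 < 2 / T := by positivity
  have hnat : Summable (fun k : ℕ => Real.exp (-(2 / T) * (k:ℝ)^2)) := by
    have hs : Summable (fun k : ℕ => Real.exp (k * (-(2/T)))) :=
      Real.summable_exp_nat_mul_iff.2 (by linarith)
    refine hs.of_nonneg_of_le (fun _ => (Real.exp_pos _).le) (fun k => ?_)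
    apply Real.exp_le_exp.2
    have : (k:ℝ) ≤ (k:ℝ)^2 := by exact_mod_cast Nat.le_self_pow (by norm_num) k
    nlinarith
  apply Summable.of_nat_of_neg
  · simpa using hnat
  · simpa using hnat

lemma term_bd (T s a : ℝ) (hs : 0 < s) (hsT : s ≤ T) (ha : |a| ≤ 2) (k : ℤ) :
    Real.exp (-(a - 4 * (k:ℝ))^2 / (2*s)) ≤ Real.exp (-(2 / T) * (k:ℝ)^2) := by
  apply Real.exp_le_exp.2
  have hT : 0 < T := hs.trans_le hsT
  have h1 : 4 * (k:ℝ)^2 ≤ (a - 4 * (k:ℝ))^2 := by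
    rw [abs_le] at ha
    have h2 : |(k:ℝ)| ≤ (k:ℝ)^2 := by
      rw [← sq_abs]
      have : |k| ≤ |k|^2 := by
        rcases eq_or_ne k 0 with h | h
        · simp [h]
        · have := Int.one_le_abs h
          nlinarith
      exact_mod_cast this
    have h3 : a * k ≤ 2 * |(k:ℝ)| := by
      calc a * k ≤ |a * k| := le_abs_self _
        _ = |a| * |(k:ℝ)| := abs_mul _ _
        _ ≤ _ := by gcongr; exact abs_le.2 ha
    -- the quadratic form is handled with |a| ≤ 2 and |k| ≤ k²
    nlinarith [sq_nonneg (a - 2 * (k:ℝ)), sq_nonneg a, abs_nonneg (k:ℝ), sq_abs (k:ℝ)]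
  have h2 : -(a - 4 * (k:ℝ))^2 / (2*s) ≤ - (4 * (k:ℝ)^2) / (2*s) := by gcongr
  have h3 : (2 / T) * (k:ℝ)^2 ≤ (2 / s) * (k:ℝ)^2 := by gcongr
  have h4 : - (4 * (k:ℝ)^2) / (2*s) = -((2 / s) * (k:ℝ)^2) := by field_simp; ring
  linarith

/-- The constant. -/
noncomputable def thC (T : ℝ) : ℝ := ∑' k : ℤ, Real.exp (-(2 / T) * (k:ℝ)^2)

lemma theta_nonneg (a s : ℝ) : 0 ≤ theta a s := tsum_nonneg fun _ => (Real.exp_pos _).le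

lemma thC_nonneg (T : ℝ) : 0 ≤ thC T := tsum_nonneg fun _ => (Real.exp_pos _).le

lemma theta_le (T s a : ℝ) (hs : 0 < s) (hsT : s ≤ T) (ha : |a| ≤ 2) : theta a s ≤ thC T := by
  have hb := summable_bd T (hs.trans_le hsT)
  exact Summable.tsum_le_tsum (term_bd T s a hs hsT ha)
    (hb.of_nonneg_of_le (fun _ => (Real.exp_pos _).le) (term_bd T s a hs hsT ha)) hb

lemma theta_cont (T a : ℝ) (hT : 0 < T) (ha : |a| ≤ 2) :
    ContinuousOn (theta a) (Set.Ioc 0 T) := by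
  unfold theta
  refine continuousOn_tsum (u := fun k : ℤ => Real.exp (-(2 / T) * (k:ℝ)^2)) ?_ (summable_bd T hT) ?_
  · intro k
    apply Real.continuous_exp.comp_continuousOn
    apply ContinuousOn.div (by fun_prop) (by fun_prop)
    intro s hs
    have := hs.1
    positivity
  · intro k s hs
    rw [Real.norm_of_nonneg (Real.exp_pos _).le]
    exact term_bd T s a hs.1 hs.2 ha k

lemma Pker_cont (T r e : ℝ) (hT : 0 < T) (he : e = 1 ∨ e = -1) (hr : r ∈ Set.Icc (-1:ℝ) 1) :
    ContinuousOn (fun s => Pker s r e) (Set.Ioc 0 T) := by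
  have ha : |r - e| ≤ 2 := by
    rw [abs_le]; rcases he with rfl | rfl <;> constructor <;> linarith [hr.1, hr.2]
  have : (fun s => Pker s r e) = fun s => 2 / Real.sqrt (2*Real.pi*s) * theta (r - e) s := by
    funext s; exact Pker_eq s r e he
  rw [this]
  refine ContinuousOn.mul (ContinuousOn.div (by fun_prop) (by fun_prop) ?_) (theta_cont T _ hT ha)
  intro s hs
  have := hs.1
  positivity

lemma Pker_nonneg (s r e : ℝ) (he : e = 1 ∨ e = -1) : 0 ≤ Pker s r e := by
  rw [Pker_eq s r e he]
  exact mul_nonneg (by positivity) (theta_nonneg _ _)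

lemma Pker_le (T s r e : ℝ) (hs : 0 < s) (hsT : s ≤ T) (he : e = 1 ∨ e = -1)
    (hr : r ∈ Set.Icc (-1:ℝ) 1) :
    Pker s r e ≤ 2 * thC T * s ^ (-(1/2) : ℝ) := by
  have ha : |r - e| ≤ 2 := by
    rw [abs_le]; rcases he with rfl | rfl <;> constructor <;> linarith [hr.1, hr.2]
  rw [Pker_eq s r e he]
  have h1 : (s:ℝ) ^ (-(1/2) : ℝ) = 1 / Real.sqrt s := by
    rw [Real.rpow_neg hs.le, Real.sqrt_eq_rpow]; simp
  have h2 : 2 / Real.sqrt (2*Real.pi*s) ≤ 2 / Real.sqrt s := by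
    have : 0 < Real.sqrt s := Real.sqrt_pos.2 hs
    gcongr
    nlinarith [Real.pi_gt_three]
  have := theta_le T s _ hs hsT ha
  calc _ ≤ 2 / Real.sqrt s * thC T :=
        mul_le_mul h2 this (theta_nonneg _ _) (by positivity)
    _ = _ := by rw [h1]; ring

lemma pow_diff_le (K : ℕ) (a b : ℝ) (ha : a ∈ Set.Icc (0:ℝ) 1) (hb : b ∈ Set.Icc (0:ℝ) 1) :
    |a ^ K - b ^ K| ≤ K * |a - b| := by
  have h := abs_pow_sub_pow_le a b K
  have h2 : max |a| |b| ^ (K-1) ≤ 1 := by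
    apply pow_le_one₀ (le_max_of_le_left (abs_nonneg _))
    rw [abs_of_nonneg ha.1, abs_of_nonneg hb.1]
    exact max_le ha.2 hb.2
  calc _ ≤ _ := h
    _ ≤ |a - b| * K * 1 := by gcongr
    _ = _ := by ring

/-- The boundary integrand. -/
noncomputable def bdI (K : ℕ) (ρ : ℝ → ℝ → ℝ) (r t s : ℝ) : ℝ :=
  Pker s r 1 * (1 - (ρ 1 (t-s))^K) - Pker s r (-1) * (1 - (1 - ρ (-1) (t-s))^K)

lemma sqrt_int (t : ℝ) (ht : 0 < t) :
    IntegrableOn (fun s : ℝ => s ^ (-(1/2) : ℝ)) (Set.Ioo 0 t) :=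
  (intervalIntegral.integrableOn_Ioo_rpow_iff ht).2 (by norm_num)

lemma bdI_int (K : ℕ) (T : ℝ) (ρ : ℝ → ℝ → ℝ)
    (hc : ContinuousOn (fun p : ℝ × ℝ => ρ p.1 p.2) (Set.Icc (-1:ℝ) 1 ×ˢ Set.Ioc (0:ℝ) T))
    (hv : ∀ r ∈ Set.Icc (-1:ℝ) 1, ∀ t ∈ Set.Ioc (0:ℝ) T, ρ r t ∈ Set.Icc (0:ℝ) 1)
    (r : ℝ) (hr : r ∈ Set.Icc (-1:ℝ) 1) (t : ℝ) (ht : t ∈ Set.Ioc (0:ℝ) T) :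
    IntegrableOn (bdI K ρ r t) (Set.Ioo 0 t) := by
  have hT : 0 < T := ht.1.trans_le ht.2
  have hsub : Set.Ioo 0 t ⊆ Set.Ioc 0 T := fun s hs => ⟨hs.1, hs.2.le.trans ht.2⟩
  have hts : ∀ s ∈ Set.Ioo 0 t, t - s ∈ Set.Ioc 0 T := fun s hs =>
    ⟨by linarith [hs.2], by linarith [hs.1, ht.2]⟩
  have hρ : ∀ e ∈ Set.Icc (-1:ℝ) 1, ContinuousOn (fun s => ρ e (t - s)) (Set.Ioo 0 t) := by
    intro e he
    exact hc.comp (f := fun s : ℝ => (e, t - s)) (by fun_prop) (fun s hs => ⟨he, hts s hs⟩)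
  have e1 : (1:ℝ) ∈ Set.Icc (-1:ℝ) 1 := by norm_num
  have e2 : (-1:ℝ) ∈ Set.Icc (-1:ℝ) 1 := by norm_num
  have hcont : ContinuousOn (bdI K ρ r t) (Set.Ioo 0 t) := by
    unfold bdI
    have p1 := (Pker_cont T r 1 hT (Or.inl rfl) hr).mono hsub
    have p2 := (Pker_cont T r (-1) hT (Or.inr rfl) hr).mono hsub
    exact (p1.mul (continuousOn_const.sub ((hρ 1 e1).pow K))).sub
      (p2.mul (continuousOn_const.sub ((continuousOn_const.sub (hρ (-1) e2)).pow K)))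
  have hg : IntegrableOn (fun s : ℝ => 4 * thC T * s ^ (-(1/2) : ℝ)) (Set.Ioo 0 t) :=
    (sqrt_int t ht.1).const_mul _
  refine Integrable.mono' hg (hcont.aestronglyMeasurable measurableSet_Ioo) ?_
  refine (ae_restrict_iff' measurableSet_Ioo).2 (Eventually.of_forall fun s hs => ?_)
  have q1 := Pker_le T s r 1 hs.1 (hsub hs).2 (Or.inl rfl) hr
  have q2 := Pker_le T s r (-1) hs.1 (hsub hs).2 (Or.inr rfl) hr
  have n1 := Pker_nonneg s r 1 (Or.inl rfl)
  have n2 := Pker_nonneg s r (-1) (Or.inr rfl)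
  have v1 := hv 1 e1 _ (hts s hs)
  have v2 := hv (-1) e2 _ (hts s hs)
  have w1 : (ρ 1 (t-s))^K ∈ Set.Icc (0:ℝ) 1 := ⟨pow_nonneg v1.1 _, pow_le_one₀ v1.1 v1.2⟩
  have w2 : (1 - ρ (-1) (t-s))^K ∈ Set.Icc (0:ℝ) 1 :=
    ⟨pow_nonneg (by linarith [v2.2]) _, pow_le_one₀ (by linarith [v2.2]) (by linarith [v2.1])⟩
  rw [Real.norm_eq_abs, abs_le]
  unfold bdI
  constructor <;> nlinarith [mul_nonneg n1 w1.1, mul_nonneg n2 w2.1,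
    mul_nonneg n1 (sub_nonneg.2 w1.2), mul_nonneg n2 (sub_nonneg.2 w2.2)]

/-- **Uniqueness of the solution of the limit integral equation.**
For any `T > 0` and initial datum `ρ0 ∈ L^∞([-1,1],[0,1])`, two `[0,1]`-valued
functions, continuous on `[-1,1] × (0,T]` and satisfying the limit integral
equation there, coincide on `[-1,1] × (0,T]`. -/
theorem limit_equation_uniqueness
    (K : ℕ) (hK : 1 ≤ K) (j : ℝ) (hj : 0 < j) (T : ℝ) (hT : 0 < T)
    (ρ0 : ℝ → ℝ) (hρ0meas : Measurable ρ0)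
    (hρ0val : ∀ r ∈ Set.Icc (-1:ℝ) 1, ρ0 r ∈ Set.Icc (0:ℝ) 1)
    (ρ1 ρ2 : ℝ → ℝ → ℝ)
    (hc1 : ContinuousOn (fun p : ℝ × ℝ => ρ1 p.1 p.2) (Set.Icc (-1:ℝ) 1 ×ˢ Set.Ioc (0:ℝ) T))
    (hc2 : ContinuousOn (fun p : ℝ × ℝ => ρ2 p.1 p.2) (Set.Icc (-1:ℝ) 1 ×ˢ Set.Ioc (0:ℝ) T))
    (hv1 : ∀ r ∈ Set.Icc (-1:ℝ) 1, ∀ t ∈ Set.Ioc (0:ℝ) T, ρ1 r t ∈ Set.Icc (0:ℝ) 1)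
    (hv2 : ∀ r ∈ Set.Icc (-1:ℝ) 1, ∀ t ∈ Set.Ioc (0:ℝ) T, ρ2 r t ∈ Set.Icc (0:ℝ) 1)
    (he1 : ∀ r ∈ Set.Icc (-1:ℝ) 1, ∀ t ∈ Set.Ioc (0:ℝ) T, ρ1 r t = limitRHS K j ρ0 ρ1 r t)
    (he2 : ∀ r ∈ Set.Icc (-1:ℝ) 1, ∀ t ∈ Set.Ioc (0:ℝ) T, ρ2 r t = limitRHS K j ρ0 ρ2 r t) :
    ∀ r ∈ Set.Icc (-1:ℝ) 1, ∀ t ∈ Set.Ioc (0:ℝ) T, ρ1 r t = ρ2 r t := by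
  have e1 : (1:ℝ) ∈ Set.Icc (-1:ℝ) 1 := by norm_num
  have e2 : (-1:ℝ) ∈ Set.Icc (-1:ℝ) 1 := by norm_num
  set C := thC T with hC
  have hC0 : 0 ≤ C := thC_nonneg T
  -- difference formula
  have hdiff : ∀ r ∈ Set.Icc (-1:ℝ) 1, ∀ t ∈ Set.Ioc (0:ℝ) T,
      ρ1 r t - ρ2 r t = (j/2) * ∫ s in Set.Ioo 0 t, (bdI K ρ1 r t s - bdI K ρ2 r t s) := by
    intro r hr t ht
    rw [integral_sub (bdI_int K T ρ1 hc1 hv1 r hr t ht) (bdI_int K T ρ2 hc2 hv2 r hr t ht),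
      he1 r hr t ht, he2 r hr t ht]
    unfold limitRHS
    rw [integral_Ioc_eq_integral_Ioo, integral_Ioc_eq_integral_Ioo]
    simp only [bdI]
    ring
  obtain ⟨l, hl0, hl⟩ : ∃ l : ℝ, 0 < l ∧ 2 * (j * K * C) * Real.sqrt (Real.pi / l) ≤ 1/2 := by
    set A := 2 * (j * K * C) with hA
    have hA0 : 0 ≤ A := by positivity
    have hp := Real.pi_pos
    refine ⟨Real.pi * (2*(A+1))^2, by positivity, ?_⟩
    have : Real.pi / (Real.pi * (2*(A+1))^2) = (1/(2*(A+1)))^2 := by field_simp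
    rw [this, Real.sqrt_sq (by positivity), mul_one_div, div_le_iff₀ (by positivity)]
    linarith
  have hG : ∫ s in Set.Ioi (0:ℝ), s ^ (-(1/2) : ℝ) * Real.exp (-(l * s)) = Real.sqrt (Real.pi / l) := by
    have h := Real.integral_rpow_mul_exp_neg_mul_Ioi (a := 1/2) (by norm_num) hl0
    rw [show (1/2 - 1 : ℝ) = -(1/2) by norm_num] at h
    rw [h, Real.Gamma_one_half_eq, Real.sqrt_eq_rpow, Real.sqrt_eq_rpow,
      ← Real.mul_rpow (by positivity) Real.pi_pos.le]
    congr 1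
    ring
  have hGI : IntegrableOn (fun s : ℝ => s ^ (-(1/2) : ℝ) * Real.exp (-(l * s))) (Set.Ioi 0) := by
    by_contra hne
    have h0 := integral_undef hne
    rw [hG] at h0
    have : 0 < Real.sqrt (Real.pi / l) := Real.sqrt_pos.2 (by positivity)
    linarith
  have key : ∀ n : ℕ, ∀ r ∈ Set.Icc (-1:ℝ) 1, ∀ t ∈ Set.Ioc (0:ℝ) T,
      |ρ1 r t - ρ2 r t| ≤ (1/2)^n * Real.exp (l * t) := by
    intro n
    induction n with
    | zero =>
      intro r hr t ht
      have a1 := hv1 r hr t ht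
      have a2 := hv2 r hr t ht
      have : 1 ≤ Real.exp (l * t) := Real.one_le_exp (by have := ht.1; positivity)
      rw [pow_zero, one_mul, abs_le]
      constructor <;> linarith [a1.1, a1.2, a2.1, a2.2]
    | succ n ih =>
      intro r hr t ht
      rw [hdiff r hr t ht, abs_mul, abs_of_pos (by positivity : 0 < j/2)]
      set D := 4 * C * K * (1/2)^n * Real.exp (l * t) with hD
      have hD0 : 0 ≤ D := by positivity
      have hb : ∀ s ∈ Set.Ioo 0 t, ‖bdI K ρ1 r t s - bdI K ρ2 r t s‖
          ≤ D * (s ^ (-(1/2) : ℝ) * Real.exp (-(l * s))) := by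
        intro s hs
        have hts : t - s ∈ Set.Ioc 0 T := ⟨by linarith [hs.2], by linarith [hs.1, ht.2]⟩
        have hsT : s ≤ T := hs.2.le.trans ht.2
        have q1 := Pker_le T s r 1 hs.1 hsT (Or.inl rfl) hr
        have q2 := Pker_le T s r (-1) hs.1 hsT (Or.inr rfl) hr
        have n1 := Pker_nonneg s r 1 (Or.inl rfl)
        have n2 := Pker_nonneg s r (-1) (Or.inr rfl)
        have a1 := hv1 1 e1 _ hts
        have a2 := hv2 1 e1 _ hts
        have b1 := hv1 (-1) e2 _ hts
        have b2 := hv2 (-1) e2 _ hts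
        have d1 := pow_diff_le K _ _ a1 a2
        have d2 := pow_diff_le K (1 - ρ1 (-1) (t-s)) (1 - ρ2 (-1) (t-s))
          ⟨by linarith [b1.2], by linarith [b1.1]⟩ ⟨by linarith [b2.2], by linarith [b2.1]⟩
        have i1 := ih 1 e1 _ hts
        have i2 := ih (-1) e2 _ hts
        rw [show (1 - ρ1 (-1) (t-s)) - (1 - ρ2 (-1) (t-s))
          = -(ρ1 (-1) (t-s) - ρ2 (-1) (t-s)) by ring, abs_neg] at d2
        set E := (1/2)^n * Real.exp (l * (t-s)) with hE
        have hE0 : 0 ≤ E := by positivity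
        have hK0 : (0:ℝ) ≤ K := Nat.cast_nonneg K
        have f1 := d1.trans (mul_le_mul_of_nonneg_left i1 hK0)
        have f2 := d2.trans (mul_le_mul_of_nonneg_left i2 hK0)
        have hs0 : 0 ≤ s ^ (-(1/2) : ℝ) := Real.rpow_nonneg hs.1.le _
        have g1 := mul_le_mul q1 f1 (abs_nonneg _) (by positivity)
        have g2 := mul_le_mul q2 f2 (abs_nonneg _) (by positivity)
        have heq : bdI K ρ1 r t s - bdI K ρ2 r t s =
            -(Pker s r 1 * ((ρ1 1 (t-s))^K - (ρ2 1 (t-s))^K))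
            + Pker s r (-1) * ((1 - ρ1 (-1) (t-s))^K - (1 - ρ2 (-1) (t-s))^K) := by
          unfold bdI; ring
        rw [heq]
        refine (norm_add_le _ _).trans ?_
        rw [norm_neg, norm_mul, norm_mul, Real.norm_of_nonneg n1, Real.norm_of_nonneg n2,
          Real.norm_eq_abs, Real.norm_eq_abs]
        refine (add_le_add g1 g2).trans (le_of_eq ?_)
        rw [hE, hD, show l * (t - s) = l * t + -(l * s) by ring, Real.exp_add]
        ring
      have hI : |∫ s in Set.Ioo 0 t, (bdI K ρ1 r t s - bdI K ρ2 r t s)|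
          ≤ D * Real.sqrt (Real.pi / l) := by
        rw [← Real.norm_eq_abs]
        have hsub : Set.Ioo 0 t ⊆ Set.Ioi (0:ℝ) := fun s hs => hs.1
        calc _ ≤ ∫ s in Set.Ioo 0 t, D * (s ^ (-(1/2) : ℝ) * Real.exp (-(l * s))) :=
              norm_integral_le_of_norm_le ((hGI.mono_set hsub).const_mul D)
                ((ae_restrict_iff' measurableSet_Ioo).2 (Eventually.of_forall hb))
          _ = D * ∫ s in Set.Ioo 0 t, (s ^ (-(1/2) : ℝ) * Real.exp (-(l * s))) :=
              integral_const_mul _ _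
          _ ≤ D * Real.sqrt (Real.pi / l) := by
              rw [← hG]
              refine mul_le_mul_of_nonneg_left ?_ hD0
              refine setIntegral_mono_set hGI ?_ hsub.eventuallyLE
              refine (ae_restrict_iff' measurableSet_Ioi).2 (Eventually.of_forall fun s hs => ?_)
              exact mul_nonneg (Real.rpow_nonneg (le_of_lt hs) _) (Real.exp_pos _).le
      calc _ ≤ j/2 * (D * Real.sqrt (Real.pi / l)) := by gcongr
        _ = (2 * (j * K * C) * Real.sqrt (Real.pi / l)) * ((1/2)^n * Real.exp (l * t)) := by
            rw [hD]; ring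
        _ ≤ 1/2 * ((1/2)^n * Real.exp (l * t)) := by gcongr
        _ = _ := by ring
  intro r hr t ht
  have hlim : Tendsto (fun n : ℕ => ((1:ℝ)/2)^n * Real.exp (l * t)) atTop (nhds (0 * Real.exp (l * t))) :=
    (tendsto_pow_atTop_nhds_zero_of_lt_one (by norm_num) (by norm_num)).mul_const _
  rw [zero_mul] at hlim
  have := ge_of_tendsto' hlim (fun n => key n r hr t ht)
  exact sub_eq_zero.1 (abs_nonpos_iff.1 this)
end

section
/- For every positive integer n and every t > 0, the iterated integral a_n(t) := ∫_{[0,t]^n} 1_{s_1+⋯+s_n ≤ t} ∏_{i=1}^n s_i^{−1/2} ds_1 ⋯ ds_n satisfies a_n(t) ≤ (πt)^{n/2} · e^{−(n/2)(log(n/2) − 1)}. -/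
open MeasureTheory Filter


/-- The iterated integral
`a_n(t) = ∫_{[0,t]^n} 1_{s₁+⋯+sₙ ≤ t} ∏ᵢ sᵢ^{-1/2} ds₁⋯dsₙ`. -/
noncomputable def aFun (n : ℕ) (t : ℝ) : ℝ :=
  ∫ s : Fin n → ℝ in
    {s : Fin n → ℝ | (∀ i, s i ∈ Set.Icc (0:ℝ) t) ∧ (∑ i, s i) ≤ t},
    ∏ i, (s i) ^ (-(1:ℝ)/2)

/-- **Bound on the iterated integral** (Lemma 5.2):
`a_n(t) ≤ (πt)^{n/2} e^{-(n/2)(log(n/2) - 1)}`. -/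
theorem iterated_integral_bound (n : ℕ) (hn : 0 < n) (t : ℝ) (ht : 0 < t) :
    aFun n t ≤ (Real.pi * t) ^ ((n:ℝ)/2)
      * Real.exp (-((n:ℝ)/2) * (Real.log ((n:ℝ)/2) - 1)) := by
  have hn' : (0:ℝ) < n := by exact_mod_cast hn
  obtain ⟨l, hl⟩ : ∃ l : ℝ, l = (n:ℝ) / 2 / t := ⟨_, rfl⟩
  have hl0 : 0 < l := by rw [hl]; positivity
  have hlt : l * t = (n:ℝ) / 2 := by rw [hl]; field_simp
  let f : ℝ → ℝ := (Set.Ioi (0:ℝ)).indicator (fun s => s ^ (-(1:ℝ)/2) * Real.exp (-(l * s)))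
  have hf0 : ∀ s, 0 ≤ f s := fun s =>
    Set.indicator_nonneg (fun x hx => by have : (0:ℝ) < x := hx; positivity) s
  have hfint : ∫ s, f s = (Real.pi / l) ^ ((1:ℝ)/2) := by
    have h := Real.integral_rpow_mul_exp_neg_mul_Ioi (a := 1/2) (r := l) (by norm_num) hl0
    rw [integral_indicator measurableSet_Ioi]
    rw [show (-(1:ℝ)/2) = 1/2 - 1 by norm_num, h, Real.Gamma_one_half_eq,
      Real.sqrt_eq_rpow, ← Real.mul_rpow (by positivity) (by positivity)]
    congr 1
    ring
  have hfi : Integrable f := by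
    by_contra h
    rw [integral_undef h] at hfint
    have : 0 < (Real.pi / l) ^ ((1:ℝ)/2) := by positivity
    linarith
  have hS : MeasurableSet {s : Fin n → ℝ | (∀ i, s i ∈ Set.Icc (0:ℝ) t) ∧ (∑ i, s i) ≤ t} := by
    have : {s : Fin n → ℝ | (∀ i, s i ∈ Set.Icc (0:ℝ) t) ∧ (∑ i, s i) ≤ t} =
      (⋂ i, {s : Fin n → ℝ | s i ∈ Set.Icc (0:ℝ) t}) ∩ {s | (∑ i, s i) ≤ t} := by
      ext s; simp
    rw [this]
    refine MeasurableSet.inter (MeasurableSet.iInter fun i => ?_) ?_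
    · exact measurableSet_Icc.preimage (measurable_pi_apply i)
    · exact measurableSet_le (by fun_prop) measurable_const
  have hgi : Integrable (fun s : Fin n → ℝ => ∏ i, f (s i)) :=
    Integrable.fintype_prod (f := fun _ => f) (fun _ => hfi)
  have key : aFun n t ≤ ∫ s : Fin n → ℝ, Real.exp (l * t) * ∏ i, f (s i) := by
    unfold aFun
    rw [← integral_indicator hS]
    refine integral_mono_of_nonneg (ae_of_all _ fun s => ?_) (hgi.const_mul _)
      (ae_of_all _ fun s => ?_)
    · exact Set.indicator_nonneg (fun x hx =>
        Finset.prod_nonneg fun i _ => Real.rpow_nonneg (hx.1 i).1 _) s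
    · have hr : 0 ≤ Real.exp (l * t) * ∏ i, f (s i) :=
        mul_nonneg (Real.exp_pos _).le (Finset.prod_nonneg fun i _ => hf0 _)
      refine Set.indicator_le' (f := fun s : Fin n → ℝ => ∏ i, (s i) ^ (-(1:ℝ)/2))
        (g := fun s : Fin n → ℝ => Real.exp (l * t) * ∏ i, f (s i)) ?_ ?_ s
      · intro s hs
        have hfe : ∀ i, f (s i) = (s i) ^ (-(1:ℝ)/2) * Real.exp (-(l * s i)) := by
          intro i
          rcases (hs.1 i).1.eq_or_lt with h | h
          · simp only [f, ← h]
            rw [Real.zero_rpow (by norm_num)]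
            simp
          · exact Set.indicator_of_mem h _
        simp only [hfe]
        rw [Finset.prod_mul_distrib, ← Real.exp_sum, mul_left_comm, ← Real.exp_add]
        refine le_mul_of_one_le_right
          (Finset.prod_nonneg fun i _ => Real.rpow_nonneg (hs.1 i).1 _) ?_
        rw [Finset.sum_neg_distrib, ← Finset.mul_sum]
        apply Real.one_le_exp
        have := mul_le_mul_of_nonneg_left hs.2 hl0.le
        linarith
      · intro s _
        exact mul_nonneg (Real.exp_pos _).le (Finset.prod_nonneg fun i _ => hf0 _)
  refine key.trans (le_of_eq ?_)
  rw [integral_const_mul, integral_fintype_prod_volume_eq_pow, hfint, hlt, Fintype.card_fin,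
    ← Real.rpow_natCast, ← Real.rpow_mul (by positivity)]
  have e1 : Real.pi / l = (Real.pi * t) * ((n:ℝ)/2)⁻¹ := by rw [hl]; field_simp
  rw [e1, Real.mul_rpow (by positivity) (by positivity), show (1:ℝ)/2 * n = n/2 by ring,
    Real.rpow_def_of_pos (x := ((n:ℝ)/2)⁻¹) (by positivity), Real.log_inv, mul_left_comm,
    ← Real.exp_add]
  congr 2
  ring
end

section
/- Fix an integer K ≥ 1. There exists a constant c > 0 such that for every h ∈ {0,1,…,K−1} and every t > 0, the transition probabilities of the continuous-time simple random walk on ℤ_+ reflected at 0 satisfy |p_t(K,h) − p_t(K+1,h)| ≤ c/(1 + t^{3/2}). Consequently, the integral ∫_0^∞ ( p_t(K,h) − p_t(K+1,h) ) dt converges absolutely, defining a real number a(h). -/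
open MeasureTheory Filter

/-- `n`-fold convolution of the nearest neighbour step kernel `π(x, x±1) = 1/2` on `ℤ`. -/
noncomputable def stepn : ℕ → ℤ → ℤ → ℝ
  | 0, x, y => if x = y then 1 else 0
  | (n+1), x, y => (1/2) * (stepn n x (y-1) + stepn n x (y+1))
/-- Transition probability of the continuous-time simple random walk on `ℤ` with jump
intensity `1/2` to each neighbour (total rate `1`). -/
noncomputable def qker (t : ℝ) (x y : ℤ) : ℝ :=
  ∑' n : ℕ, Real.exp (-t) * t^n / (Nat.factorial n) * stepn n x y

/-- `p_t(x,y)`: transition probability of the continuous-time simple random walk on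
`ℤ_+` with jump intensity `1/2` along each edge, jumps from `0` to `-1` suppressed;
realized by folding the free walk on `ℤ` through the reflection `z ↦ -z-1`. -/
noncomputable def pHalf (t : ℝ) (x y : ℕ) : ℝ :=
  qker t (x:ℤ) (y:ℤ) + qker t (x:ℤ) (-(y:ℤ)-1)

lemma stepn_eq (n : ℕ) (x y : ℤ) :
    stepn n x y = (1 / Real.pi) * ∫ θ in (0:ℝ)..Real.pi,
      Real.cos (((x:ℝ) - y) * θ) * Real.cos θ ^ n := by
  induction n generalizing y with
  | zero =>
    by_cases hxy : x = y
    · subst hxy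
      simp [stepn, Real.pi_ne_zero]
    · have hk : ((x:ℝ) - y) ≠ 0 := by
        rw [sub_ne_zero]; exact_mod_cast hxy
      have h0 : Real.sin (((x:ℝ) - y) * Real.pi) = 0 := by
        have := Real.sin_int_mul_pi (x - y)
        simpa using this
      simp only [stepn, hxy, if_false, pow_zero, mul_one]
      rw [intervalIntegral.integral_comp_mul_left (fun u => Real.cos u) hk]
      simp [h0]
  | succ n ih =>
    have h1 : ∀ z : ℤ, IntervalIntegrable
        (fun θ : ℝ => Real.cos (((x:ℝ) - z) * θ) * Real.cos θ ^ n) volume 0 Real.pi := by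
      intro z
      apply Continuous.intervalIntegrable
      fun_prop
    simp only [stepn]
    rw [ih, ih, ← mul_add, ← intervalIntegral.integral_add (h1 _) (h1 _), mul_left_comm,
      ← intervalIntegral.integral_const_mul]
    congr 1
    apply intervalIntegral.integral_congr
    intro θ _
    simp only
    push_cast
    have e1 : ((x:ℝ) - (y - 1)) * θ = ((x:ℝ) - y) * θ + θ := by ring
    have e2 : ((x:ℝ) - (y + 1)) * θ = ((x:ℝ) - y) * θ - θ := by ring
    rw [e1, e2, Real.cos_add, Real.cos_sub]
    ring

lemma qker_eq (t : ℝ) (x y : ℤ) :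
    qker t x y = (1 / Real.pi) * ∫ θ in (0:ℝ)..Real.pi,
      Real.cos (((x:ℝ) - y) * θ) * Real.exp (-(t * (1 - Real.cos θ))) := by
  have key : HasSum (fun n : ℕ => ∫ θ in (0:ℝ)..Real.pi,
      Real.exp (-t) * t^n / (Nat.factorial n) *
        (Real.cos (((x:ℝ) - y) * θ) * Real.cos θ ^ n))
      (∫ θ in (0:ℝ)..Real.pi,
      Real.cos (((x:ℝ) - y) * θ) * Real.exp (-(t * (1 - Real.cos θ)))) := by
    apply intervalIntegral.hasSum_integral_of_dominated_convergence
      (fun n _ => Real.exp (-t) * (|t|^n / (Nat.factorial n)))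
    · intro n
      apply Continuous.aestronglyMeasurable
      fun_prop
    · intro n
      refine Filter.Eventually.of_forall fun θ _ => ?_
      rw [Real.norm_eq_abs, abs_mul, abs_mul, abs_div, abs_mul, abs_pow, abs_pow, Real.abs_exp,
        Nat.abs_cast, mul_div_assoc]
      apply mul_le_of_le_one_right (by positivity)
      exact mul_le_one₀ (Real.abs_cos_le_one _) (by positivity)
        (pow_le_one₀ (abs_nonneg _) (Real.abs_cos_le_one _))
    · refine Filter.Eventually.of_forall fun θ _ => ?_
      exact (Real.summable_pow_div_factorial |t|).mul_left _
    · exact intervalIntegrable_const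
    · refine Filter.Eventually.of_forall fun θ _ => ?_
      have h := NormedSpace.expSeries_div_hasSum_exp (t * Real.cos θ)
      rw [← Real.exp_eq_exp_ℝ] at h
      have h2 := h.mul_left (Real.cos (((x:ℝ) - y) * θ) * Real.exp (-t))
      convert h2 using 1
      · rfl
      · funext n
        rw [mul_pow]; ring
      · rw [mul_assoc, ← Real.exp_add]
        ring_nf
  have h3 := (key.mul_left (1 / Real.pi)).tsum_eq
  rw [← h3, qker]
  apply tsum_congr
  intro n
  rw [intervalIntegral.integral_const_mul, stepn_eq]
  ring

lemma qker_continuous (x y : ℤ) : Continuous (fun t => qker t x y) := by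
  simp only [qker_eq]
  apply continuous_const.mul
  apply intervalIntegral.continuous_parametric_intervalIntegral_of_continuous'
  unfold Function.uncurry
  fun_prop

lemma cos_diff_bound (M k θ : ℝ) (hM : |k| ≤ M) :
    |Real.cos (k * θ) - Real.cos ((k + 1) * θ)| ≤ (M + 1)^2 * θ^2 := by
  have h1 := Real.one_sub_sq_div_two_le_cos (x := k * θ)
  have h2 := Real.one_sub_sq_div_two_le_cos (x := (k+1) * θ)
  have h3 := Real.cos_le_one (k * θ)
  have h4 := Real.cos_le_one ((k+1) * θ)
  have hM0 : 0 ≤ M := (abs_nonneg _).trans hM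
  have hk := abs_le.1 hM
  have h5 : k^2 ≤ (M+1)^2 := by apply sq_le_sq'  <;> linarith
  have h6 : (k+1)^2 ≤ (M+1)^2 := by apply sq_le_sq'  <;> linarith
  have h7 := mul_le_mul_of_nonneg_right h5 (sq_nonneg θ)
  have h8 := mul_le_mul_of_nonneg_right h6 (sq_nonneg θ)
  have h9 : 0 ≤ (M+1)^2 * θ^2 := by positivity
  rw [mul_pow] at h1 h2
  rw [abs_le]
  constructor <;> linarith

lemma qdiff_eq (t : ℝ) (x y : ℤ) :
    qker t x y - qker t (x+1) y = (1 / Real.pi) * ∫ θ in (0:ℝ)..Real.pi,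
      (Real.cos (((x:ℝ) - y) * θ) - Real.cos ((((x:ℝ) - y) + 1) * θ)) *
        Real.exp (-(t * (1 - Real.cos θ))) := by
  rw [qker_eq, qker_eq, ← mul_sub, ← intervalIntegral.integral_sub]
  · congr 1
    apply intervalIntegral.integral_congr
    intro θ _
    simp only
    push_cast
    rw [show ((x:ℝ) + 1 - y) = (x:ℝ) - y + 1 by ring]
    ring
  · apply Continuous.intervalIntegrable
    fun_prop
  · apply Continuous.intervalIntegrable
    fun_prop

lemma gauss_bound (t : ℝ) (ht : 0 < t) :
    ∫ θ in (0:ℝ)..Real.pi, θ^2 * Real.exp (-(2 / Real.pi^2 * t) * θ^2) ≤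
      t ^ (-((3:ℝ)/2)) * ((2 / Real.pi^2) ^ (-((3:ℝ)/2)) * (1/2) * Real.Gamma (3/2)) := by
  have hpi := Real.pi_pos
  have hc : (0:ℝ) < 2 / Real.pi^2 := by positivity
  have hb : 0 < 2 / Real.pi^2 * t := by positivity
  have h1 := integral_rpow_mul_exp_neg_mul_rpow (p := 2) (q := 2) (b := 2 / Real.pi^2 * t)
    (by norm_num) (by norm_num) hb
  have h2 := integrableOn_rpow_mul_exp_neg_mul_rpow (p := 2) (s := 2) (b := 2 / Real.pi^2 * t)
    (by norm_num) (by norm_num) hb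
  simp only [Real.rpow_two] at h1 h2
  rw [intervalIntegral.integral_of_le hpi.le]
  calc _ ≤ ∫ θ in Set.Ioi (0:ℝ), θ^2 * Real.exp (-(2 / Real.pi^2 * t) * θ^2) := by
        apply setIntegral_mono_set h2
        · exact Filter.Eventually.of_forall fun θ => by simp only [Pi.zero_apply]; positivity
        · exact Filter.Eventually.of_forall fun θ h => h.1
    _ = _ := by
        rw [h1, show (-(2 + 1) / 2 : ℝ) = -((3:ℝ)/2) by norm_num,
          show ((2 + 1) / 2 : ℝ) = (3:ℝ)/2 by norm_num, Real.mul_rpow hc.le ht.le]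
        ring

lemma qdiff_bound (M : ℝ) (hM : 0 ≤ M) : ∃ c : ℝ, 0 < c ∧ ∀ x y : ℤ, |(x:ℝ) - y| ≤ M →
    ∀ t : ℝ, 0 < t → |qker t x y - qker t (x+1) y| ≤ c / (1 + t ^ ((3:ℝ)/2)) := by
  have hpi := Real.pi_pos
  set G := ((2 / Real.pi^2) ^ (-((3:ℝ)/2)) * (1/2) * Real.Gamma (3/2)) with hG
  have hG0 : 0 < G := by
    have := Real.Gamma_pos_of_pos (s := 3/2) (by norm_num)
    positivity
  refine ⟨2 + (1 / Real.pi) * ((M+1)^2 * G), by positivity, ?_⟩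
  intro x y hxy t ht
  have A : |qker t x y - qker t (x+1) y| ≤ 2 := by
    rw [qdiff_eq, abs_mul, abs_of_pos (by positivity)]
    have := intervalIntegral.norm_integral_le_of_norm_le_const (a := 0) (b := Real.pi) (C := 2)
      (f := fun θ => (Real.cos (((x:ℝ) - y) * θ) - Real.cos ((((x:ℝ) - y) + 1) * θ)) *
        Real.exp (-(t * (1 - Real.cos θ)))) (by
        intro θ _
        rw [Real.norm_eq_abs, abs_mul, Real.abs_exp]
        have h1 : Real.exp (-(t * (1 - Real.cos θ))) ≤ 1 := by
          rw [Real.exp_le_one_iff]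
          have := mul_nonneg ht.le (sub_nonneg.2 (Real.cos_le_one θ))
          linarith
        have h2 : |Real.cos (((x:ℝ) - y) * θ) - Real.cos ((((x:ℝ) - y) + 1) * θ)| ≤ 2 := by
          refine (abs_sub _ _).trans ?_
          linarith [Real.abs_cos_le_one (((x:ℝ) - y) * θ),
            Real.abs_cos_le_one ((((x:ℝ) - y) + 1) * θ)]
        calc _ ≤ 2 * 1 := mul_le_mul h2 h1 (Real.exp_pos _).le (by norm_num)
          _ = 2 := by norm_num)
    rw [Real.norm_eq_abs, sub_zero, abs_of_pos hpi] at this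
    calc _ ≤ 1 / Real.pi * (2 * Real.pi) := by gcongr
      _ = 2 := by field_simp
  have B : |qker t x y - qker t (x+1) y| ≤
      (1 / Real.pi) * ((M+1)^2 * (t ^ (-((3:ℝ)/2)) * G)) := by
    rw [qdiff_eq, abs_mul, abs_of_pos (by positivity)]
    gcongr
    refine (intervalIntegral.abs_integral_le_integral_abs hpi.le).trans ?_
    refine le_trans ?_ (mul_le_mul_of_nonneg_left (gauss_bound t ht) (by positivity))
    rw [← intervalIntegral.integral_const_mul]
    apply intervalIntegral.integral_mono_on hpi.le
    · apply Continuous.intervalIntegrable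
      fun_prop
    · apply Continuous.intervalIntegrable
      fun_prop
    · intro θ hθ
      rw [abs_mul, Real.abs_exp, ← mul_assoc]
      have h1 := cos_diff_bound M _ θ hxy
      have h2 := Real.cos_le_one_sub_mul_cos_sq (x := θ) (by
        rw [abs_of_nonneg hθ.1]; exact hθ.2)
      refine mul_le_mul h1 ?_ (Real.exp_pos _).le (by positivity)
      apply Real.exp_le_exp.2
      have := mul_le_mul_of_nonneg_left h2 ht.le
      linarith
  have hT : 0 < t ^ ((3:ℝ)/2) := Real.rpow_pos_of_pos ht _
  rw [le_div_iff₀ (by positivity), mul_add, mul_one]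
  apply add_le_add A
  calc _ ≤ (1 / Real.pi) * ((M+1)^2 * (t ^ (-((3:ℝ)/2)) * G)) * t ^ ((3:ℝ)/2) := by gcongr
    _ = (1 / Real.pi) * ((M+1)^2 * G) := by
      rw [Real.rpow_neg ht.le]
      field_simp

lemma bound_integrable (c : ℝ) :
    IntegrableOn (fun t : ℝ => c / (1 + t ^ ((3:ℝ)/2))) (Set.Ioi (0:ℝ)) := by
  have hm : Measurable (fun t : ℝ => c / (1 + t ^ ((3:ℝ)/2))) := by fun_prop
  rw [← Set.Ioc_union_Ioi_eq_Ioi zero_le_one]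
  apply IntegrableOn.union
  · refine Measure.integrableOn_of_bounded (M := |c|) (by simp) hm.aestronglyMeasurable ?_
    filter_upwards [ae_restrict_mem measurableSet_Ioc] with t ht
    have hT : 0 < t ^ ((3:ℝ)/2) := Real.rpow_pos_of_pos ht.1 _
    rw [Real.norm_eq_abs, abs_div, abs_of_pos (by positivity : 0 < 1 + t ^ ((3:ℝ)/2))]
    exact div_le_self (abs_nonneg _) (by linarith)
  · have h := (integrableOn_Ioi_rpow_of_lt (a := -((3:ℝ)/2)) (by norm_num) one_pos).const_mul |c|
    refine Integrable.mono' h hm.aestronglyMeasurable ?_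
    filter_upwards [ae_restrict_mem measurableSet_Ioi] with t ht
    have ht0 : 0 < t := lt_trans one_pos ht
    have hT : 0 < t ^ ((3:ℝ)/2) := Real.rpow_pos_of_pos ht0 _
    rw [Real.norm_eq_abs, abs_div, abs_of_pos (by positivity : 0 < 1 + t ^ ((3:ℝ)/2)),
      Real.rpow_neg ht0.le, div_eq_mul_inv]
    gcongr
    linarith

/-- **Gradient estimate for the half-line walk** (Lemma 6.2). There is `c > 0` such
that for every `h ∈ {0,…,K-1}` and `t > 0`,
`|p_t(K,h) - p_t(K+1,h)| ≤ c/(1+t^{3/2})`; consequently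
`∫_0^∞ (p_t(K,h) - p_t(K+1,h)) dt` converges absolutely, defining `a(h)`. -/
theorem halfline_gradient_estimate (K : ℕ) (hK : 1 ≤ K) :
    ∃ c : ℝ, 0 < c ∧
      (∀ h : ℕ, h < K → ∀ t : ℝ, 0 < t →
        |pHalf t K h - pHalf t (K+1) h| ≤ c / (1 + t ^ ((3:ℝ)/2)))
      ∧ (∀ h : ℕ, h < K →
        MeasureTheory.IntegrableOn (fun t => pHalf t K h - pHalf t (K+1) h)
          (Set.Ioi (0:ℝ))) := by
  obtain ⟨c, hc, H⟩ := qdiff_bound (2 * K + 2) (by positivity)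
  have main : ∀ h : ℕ, h < K → ∀ t : ℝ, 0 < t →
        |pHalf t K h - pHalf t (K+1) h| ≤ (2 * c) / (1 + t ^ ((3:ℝ)/2)) := by
    intro h hh t ht
    have hh' : (h:ℝ) < K := by exact_mod_cast hh
    have h0 : (0:ℝ) ≤ h := Nat.cast_nonneg h
    have h1 := H (K:ℤ) (h:ℤ) (by push_cast; rw [abs_le]; constructor <;> linarith) t ht
    have h2 := H (K:ℤ) (-(h:ℤ)-1) (by push_cast; rw [abs_le]; constructor <;> linarith) t ht
    unfold pHalf
    push_cast
    rw [add_sub_add_comm]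
    refine (abs_add_le _ _).trans ((add_le_add h1 h2).trans (le_of_eq ?_))
    ring
  refine ⟨2 * c, by positivity, main, ?_⟩
  intro h hh
  refine Integrable.mono' (bound_integrable (2 * c)) ?_ ?_
  · apply Continuous.aestronglyMeasurable
    unfold pHalf
    exact ((qker_continuous _ _).add (qker_continuous _ _)).sub
      ((qker_continuous _ _).add (qker_continuous _ _))
  · filter_upwards [ae_restrict_mem measurableSet_Ioi] with t ht
    exact main h hh t ht
end
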